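/- Let Λ and C be finite non-empty sets, let m* be a positive integer, let m** = f^{8,*}_Λ(m*, C), and let d: U_{m**,Λ} → C be any coloring. Then there is a coloring e: U_{m*,Λ} → C such that (1) if η₁, η₂ ∈ U_{m*,Λ} satisfy |η₁⁻¹{α}| = |η₂⁻¹{α}| for all α ∈ Λ, then e(η₁) = e(η₂), and (2) if there is an e-monochromatic line in U_{m*,Λ}, then there is a d-monochromatic line in U_{m**,Λ}. -/

import Mathlib

open Finset

/-- `ν` belongs to the subspace `S(⟨Ms ℓ : ℓ < m⟩, ρ)` of `U_{Fin k, Λ}`: it agrees with `ρ`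
off the blocks and is constant on each block `Ms ℓ`. -/
def InSubspace {Λ : Type*} {k m : ℕ} (Ms : Fin m → Finset (Fin k))
    (ρ : Fin k → Λ) (ν : Fin k → Λ) : Prop :=
  (∀ t : Fin k, (∀ ℓ, t ∉ Ms ℓ) → ν t = ρ t) ∧
    ∀ ℓ : Fin m, ∃ a : Λ, ∀ t ∈ Ms ℓ, ν t = a

/-- The number of blocks `Ms ℓ` on which `ν` is constantly `α`. -/
def blockCount {Λ : Type*} [DecidableEq Λ] {k m : ℕ} (Ms : Fin m → Finset (Fin k))
    (ν : Fin k → Λ) (α : Λ) : ℕ :=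
  (Finset.univ.filter fun ℓ : Fin m => ∀ t ∈ Ms ℓ, ν t = α).card

/-- `k` is large enough for the `m`-dimensional Hales-Jewett property: every `C`-coloring of
`U_{Fin k, Λ}` admits a monochromatic `m`-dimensional subspace. -/
def HJProp (Λ C : Type*) (m k : ℕ) : Prop :=
  ∀ d : (Fin k → Λ) → C,
    ∃ (Ms : Fin m → Finset (Fin k)) (ρ : Fin k → Λ),
      (∀ ℓ, (Ms ℓ).Nonempty) ∧
      (∀ ℓ₁ ℓ₂, ℓ₁ ≠ ℓ₂ → Disjoint (Ms ℓ₁) (Ms ℓ₂)) ∧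
      ∃ c : C, ∀ ν, InSubspace Ms ρ ν → d ν = c

/-- The Hales-Jewett number `hj_C(m, Λ)`. -/
noncomputable def hjNum (Λ C : Type*) (m : ℕ) : ℕ := sInf {k | HJProp Λ C m k}

/-- Like `HJProp`, but the blocks of the monochromatic subspace all have the same size. -/
def HJEqProp (Λ C : Type*) (m k : ℕ) : Prop :=
  ∀ d : (Fin k → Λ) → C,
    ∃ (Ms : Fin m → Finset (Fin k)) (ρ : Fin k → Λ),
      (∀ ℓ, (Ms ℓ).Nonempty) ∧
      (∀ ℓ₁ ℓ₂, ℓ₁ ≠ ℓ₂ → Disjoint (Ms ℓ₁) (Ms ℓ₂)) ∧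
      (∀ ℓ₁ ℓ₂, (Ms ℓ₁).card = (Ms ℓ₂).card) ∧
      ∃ c : C, ∀ ν, InSubspace Ms ρ ν → d ν = c

/-- The number `hj^=_C(m, Λ)`. -/
noncomputable def hjEqNum (Λ C : Type*) (m : ℕ) : ℕ := sInf {k | HJEqProp Λ C m k}

/-- The partition property underlying `f^8_Λ(m, C)`: `d` is constant on the set of members
`ν` of the subspace realizing each letter `α` on exactly `m / |Λ|` many blocks. -/
def F8Prop (Λ C : Type*) [Fintype Λ] [DecidableEq Λ] (m k : ℕ) : Prop :=
  ∀ d : (Fin k → Λ) → C,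
    ∃ (Ms : Fin m → Finset (Fin k)) (ρ : Fin k → Λ),
      (∀ ℓ, (Ms ℓ).Nonempty) ∧
      (∀ ℓ₁ ℓ₂, ℓ₁ ≠ ℓ₂ → Disjoint (Ms ℓ₁) (Ms ℓ₂)) ∧
      ∃ c : C, ∀ ν, InSubspace Ms ρ ν →
        (∀ α : Λ, blockCount Ms ν α = m / Fintype.card Λ) → d ν = c

/-- Shelah's number `f^8_Λ(m, C)`. -/
noncomputable def f8 (Λ C : Type*) [Fintype Λ] [DecidableEq Λ] (m : ℕ) : ℕ :=
  sInf {k | F8Prop Λ C m k}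

/-- As `F8Prop`, but with all blocks of the same size. -/
def F9Prop (Λ C : Type*) [Fintype Λ] [DecidableEq Λ] (m k : ℕ) : Prop :=
  ∀ d : (Fin k → Λ) → C,
    ∃ (Ms : Fin m → Finset (Fin k)) (ρ : Fin k → Λ),
      (∀ ℓ, (Ms ℓ).Nonempty) ∧
      (∀ ℓ₁ ℓ₂, ℓ₁ ≠ ℓ₂ → Disjoint (Ms ℓ₁) (Ms ℓ₂)) ∧
      (∀ ℓ₁ ℓ₂, (Ms ℓ₁).card = (Ms ℓ₂).card) ∧
      ∃ c : C, ∀ ν, InSubspace Ms ρ ν →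
        (∀ α : Λ, blockCount Ms ν α = m / Fintype.card Λ) → d ν = c

/-- Shelah's number `f^9_Λ(m, C)`: the minimal `k` divisible by `|Λ|` with `F9Prop`. -/
noncomputable def f9 (Λ C : Type*) [Fintype Λ] [DecidableEq Λ] (m : ℕ) : ℕ :=
  sInf {k | Fintype.card Λ ∣ k ∧ F9Prop Λ C m k}

/-- The partition property underlying `f^{8,*}_Λ(m, C)`: any two members of the subspace
realizing each letter on the same number of blocks get the same color. -/
def F8StarProp (Λ C : Type*) [DecidableEq Λ] (m k : ℕ) : Prop :=
  ∀ d : (Fin k → Λ) → C,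
    ∃ (Ms : Fin m → Finset (Fin k)) (ρ : Fin k → Λ),
      (∀ ℓ, (Ms ℓ).Nonempty) ∧
      (∀ ℓ₁ ℓ₂, ℓ₁ ≠ ℓ₂ → Disjoint (Ms ℓ₁) (Ms ℓ₂)) ∧
      ∀ ν₁ ν₂, InSubspace Ms ρ ν₁ → InSubspace Ms ρ ν₂ →
        (∀ α : Λ, blockCount Ms ν₁ α = blockCount Ms ν₂ α) → d ν₁ = d ν₂

/-- Shelah's number `f^{8,*}_Λ(m, C)`. -/
noncomputable def f8Star (Λ C : Type*) [DecidableEq Λ] (m : ℕ) : ℕ :=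
  sInf {k | F8StarProp Λ C m k}

/-- As `F8StarProp`, but with all blocks of the same size. -/
def F9StarProp (Λ C : Type*) [DecidableEq Λ] (m k : ℕ) : Prop :=
  ∀ d : (Fin k → Λ) → C,
    ∃ (Ms : Fin m → Finset (Fin k)) (ρ : Fin k → Λ),
      (∀ ℓ, (Ms ℓ).Nonempty) ∧
      (∀ ℓ₁ ℓ₂, ℓ₁ ≠ ℓ₂ → Disjoint (Ms ℓ₁) (Ms ℓ₂)) ∧
      (∀ ℓ₁ ℓ₂, (Ms ℓ₁).card = (Ms ℓ₂).card) ∧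
      ∀ ν₁ ν₂, InSubspace Ms ρ ν₁ → InSubspace Ms ρ ν₂ →
        (∀ α : Λ, blockCount Ms ν₁ α = blockCount Ms ν₂ α) → d ν₁ = d ν₂

/-- Shelah's number `f^{9,*}_Λ(m, C)`: the minimal `k` divisible by `|Λ|` with `F9StarProp`. -/
noncomputable def f9Star (Λ C : Type*) [Fintype Λ] [DecidableEq Λ] (m : ℕ) : ℕ :=
  sInf {k | Fintype.card Λ ∣ k ∧ F9StarProp Λ C m k}

/-- As `F9StarProp`, but with all blocks of size exactly `n`. -/
def F9StarFixedProp (Λ C : Type*) [DecidableEq Λ] (n m k : ℕ) : Prop :=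
  ∀ d : (Fin k → Λ) → C,
    ∃ (Ms : Fin m → Finset (Fin k)) (ρ : Fin k → Λ),
      (∀ ℓ, (Ms ℓ).card = n) ∧
      (∀ ℓ₁ ℓ₂, ℓ₁ ≠ ℓ₂ → Disjoint (Ms ℓ₁) (Ms ℓ₂)) ∧
      ∀ ν₁ ν₂, InSubspace Ms ρ ν₁ → InSubspace Ms ρ ν₂ →
        (∀ α : Λ, blockCount Ms ν₁ α = blockCount Ms ν₂ α) → d ν₁ = d ν₂

/-- Shelah's number `f^{9,*}_{Λ,n}(m, C)`. -/
noncomputable def f9StarFixed (Λ C : Type*) [Fintype Λ] [DecidableEq Λ] (n m : ℕ) : ℕ :=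
  sInf {k | Fintype.card Λ ∣ k ∧ F9StarFixedProp Λ C n m k}

/-- The partition property underlying `f^{13}_Λ(m, C)`: there is an `m`-element set `N` and
`ρ` on its complement such that any two extensions of `ρ` realizing each letter equally often
on `N` get the same color. -/
def F13Prop (Λ C : Type*) [DecidableEq Λ] (m k : ℕ) : Prop :=
  ∀ d : (Fin k → Λ) → C,
    ∃ N : Finset (Fin k), N.card = m ∧
      ∃ ρ : Fin k → Λ, ∀ η₁ η₂ : Fin k → Λ,
        (∀ t ∉ N, η₁ t = ρ t) → (∀ t ∉ N, η₂ t = ρ t) →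
        (∀ α : Λ, (N.filter fun t => η₁ t = α).card = (N.filter fun t => η₂ t = α).card) →
        d η₁ = d η₂

/-- The number `f^{13}_Λ(m, C)` of Golshani-Shelah. -/
noncomputable def f13 (Λ C : Type*) [DecidableEq Λ] (m : ℕ) : ℕ :=
  sInf {k | F13Prop Λ C m k}

/-- The Gallai-Witt property: every `C`-coloring of `U_{h,n}` (the `h`-tuples of numbers
below `n`) is constant on a homothetic copy `{⟨m_e + d'⬝i_e : e < h⟩ : i_0, …, i_{h-1} ≤ m}`
of the cube `{0, …, m}^h`. -/
def GWProp (C : Type*) (h m n : ℕ) : Prop :=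
  ∀ d : (Fin h → Fin n) → C,
    ∃ d' : ℕ, 0 < d' ∧ ∃ ms : Fin h → ℕ,
      (∀ e, ms e + d' * m < n) ∧
      ∃ c : C, ∀ i : Fin h → ℕ, (∀ e, i e ≤ m) →
        ∀ hlt : ∀ e, ms e + d' * i e < n,
          d (fun e => ⟨ms e + d' * i e, hlt e⟩) = c

/-- The Gallai-Witt number `w_C(h, m)`. -/
noncomputable def gwNum (C : Type*) (h m : ℕ) : ℕ := sInf {n | GWProp C h m n}

/-- The van der Waerden property: every coloring of `{0, …, N-1}` with `r` colors contains a
monochromatic arithmetic progression of length `m` (with positive common difference). -/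
def VDWProp (r m N : ℕ) : Prop :=
  ∀ d : Fin N → Fin r,
    ∃ a dd : ℕ, 0 < dd ∧ (∀ i < m, a + i * dd < N) ∧
      ∃ c : Fin r, ∀ i : ℕ, i < m → ∀ h : a + i * dd < N, d ⟨a + i * dd, h⟩ = c

/-- The van der Waerden number `w(r, m)`. -/
noncomputable def vdwNum (r m : ℕ) : ℕ := sInf {N | VDWProp r m N}

/-- The coloring `d` of `U_{Fin k, Λ}` admits a monochromatic (combinatorial) line. -/
def HasMonoLine {Λ C : Type*} {k : ℕ} (d : (Fin k → Λ) → C) : Prop :=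
  ∃ N : Finset (Fin k), N.Nonempty ∧ ∃ ρ : Fin k → Λ, ∃ c : C,
    ∀ η : Fin k → Λ, (∀ t ∉ N, η t = ρ t) → (∃ a : Λ, ∀ t ∈ N, η t = a) → d η = c

/-- Property `(⊕)` for `m*`: for every `C`-coloring `d` of
`Ω = {⟨ℓ_α : α ∈ Λ⟩ : Σ_α ℓ_α = m*}` there are `ℓ* > 0` and `⟨ℓ*_α : α ∈ Λ⟩` such that all the
tuples `ℓ̄^α` (obtained from `⟨ℓ*_β⟩` by increasing the `α`-entry by `ℓ*`) lie in `Ω` and get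
the same color. -/
def OplusProp (Λ C : Type*) [Fintype Λ] [DecidableEq Λ] (mstar : ℕ) : Prop :=
  ∀ d : (Λ → ℕ) → C,
    ∃ lstar : ℕ, 0 < lstar ∧ ∃ ls : Λ → ℕ,
      (∀ α : Λ, (∑ β : Λ, Function.update ls α (ls α + lstar) β) = mstar) ∧
      ∃ c : C, ∀ α : Λ, d (Function.update ls α (ls α + lstar)) = c

/-!
The point set of a block system `⟨Ms, ρ⟩` is the image of an embedding of `U_{m, Λ}` into
`U_{k, Λ}`, and the number of blocks on which the image of `x` is constantly `α` is the number of
occurrences of `α` in `x`. The defining property of `f^{8,*}` thus yields an embedding `l` such that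
`d ∘ l` depends only on these numbers, and `l` carries lines to lines. By the
multidimensional Hales–Jewett theorem, the infimum defining `f^{8,*}` is over a nonempty set of
natural numbers, hence attained (`sInf ∅ = 0` would be a junk value).
-/

section ComposeLine

variable {η α ι : Type*}

/-- The image of the combinatorial line `L` under the embedding of cubes given by the
combinatorial subspace `l`. -/
def composeLine (l : Combinatorics.Subspace η α ι) (L : Combinatorics.Line α η) :
    Combinatorics.Line α ι where
  idxFun i := (l.idxFun i).elim some L.idxFun
  proper := by
    obtain ⟨e, he⟩ := L.proper
    obtain ⟨i, hi⟩ := l.proper e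
    exact ⟨i, by simp only [hi, Sum.elim_inr, he]⟩

lemma composeLine_apply (l : Combinatorics.Subspace η α ι) (L : Combinatorics.Line α η) (a : α) :
    composeLine l L a = l (L a) := by
  funext i
  cases hi : l.idxFun i <;> simp [composeLine, Combinatorics.Subspace.coe_apply, hi]

end ComposeLine

section Coloring

variable {Λ C : Type*} {k m : ℕ}

/-- The combinatorial subspace `l`, viewed as a map `U_{m, Λ} → U_{k, Λ}`, reads its `ℓ`-th
argument exactly on the block `Ms ℓ` and is `ρ` off the blocks. This links the block systems used
for `F8StarProp` with Mathlib's combinatorial subspaces; the values of `ρ` on the blocks are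
irrelevant. -/
structure Parametrizes (l : Combinatorics.Subspace (Fin m) Λ (Fin k))
    (Ms : Fin m → Finset (Fin k)) (ρ : Fin k → Λ) : Prop where
  idxFun_eq_inr_iff : ∀ {t ℓ}, l.idxFun t = Sum.inr ℓ ↔ t ∈ Ms ℓ
  apply_of_forall_notMem : ∀ (x : Fin m → Λ) {t}, (∀ ℓ, t ∉ Ms ℓ) → l x t = ρ t

lemma exists_parametrizes_of_blocks {Ms : Fin m → Finset (Fin k)} (ρ : Fin k → Λ)
    (hMs : ∀ ℓ, (Ms ℓ).Nonempty) (hdisj : ∀ ℓ₁ ℓ₂, ℓ₁ ≠ ℓ₂ → Disjoint (Ms ℓ₁) (Ms ℓ₂)) :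
    ∃ l, Parametrizes l Ms ρ := by
  have hword : ∀ t, ∃ s : Λ ⊕ Fin m, (∀ ℓ, s = Sum.inr ℓ ↔ t ∈ Ms ℓ) ∧
      ((∀ ℓ, t ∉ Ms ℓ) → s = Sum.inl (ρ t)) := by
    intro t
    by_cases ht : ∃ ℓ, t ∈ Ms ℓ
    · obtain ⟨ℓ, hℓ⟩ := ht
      refine ⟨Sum.inr ℓ, fun ℓ' => ⟨?_, fun hℓ' => ?_⟩, fun h => absurd hℓ (h ℓ)⟩
      · rintro ⟨⟩
        exact hℓ
      · by_contra hne
        exact disjoint_left.1 (hdisj ℓ ℓ' (hne <| congrArg Sum.inr ·)) hℓ hℓ'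
    · push Not at ht
      exact ⟨Sum.inl (ρ t), fun ℓ => by simp [ht ℓ], fun _ => rfl⟩
  choose word hinr hinl using hword
  refine ⟨⟨word, fun ℓ => (hMs ℓ).imp fun t ht => (hinr t ℓ).2 ht⟩, hinr _ _, fun x t ht => ?_⟩
  exact Combinatorics.Subspace.apply_inl (hinl t ht)

lemma exists_blocks_parametrizes [Nonempty Λ] (l : Combinatorics.Subspace (Fin m) Λ (Fin k)) :
    ∃ Ms ρ, Parametrizes l Ms ρ := by
  classical
  refine ⟨fun ℓ => {t | l.idxFun t = Sum.inr ℓ}, l fun _ => Classical.arbitrary Λ, by simp,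
    fun x t ht => ?_⟩
  cases h : l.idxFun t with
  | inl a => simp only [Combinatorics.Subspace.apply_inl h]
  | inr ℓ => simp [h] at ht

namespace Parametrizes

variable {l : Combinatorics.Subspace (Fin m) Λ (Fin k)} {Ms : Fin m → Finset (Fin k)}
  {ρ : Fin k → Λ}

lemma nonempty (h : Parametrizes l Ms ρ) (ℓ : Fin m) : (Ms ℓ).Nonempty :=
  (l.proper ℓ).imp fun _ => h.idxFun_eq_inr_iff.1

lemma disjoint (h : Parametrizes l Ms ρ) {ℓ₁ ℓ₂ : Fin m} (hne : ℓ₁ ≠ ℓ₂) :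
    Disjoint (Ms ℓ₁) (Ms ℓ₂) :=
  disjoint_left.2 fun _ h₁ h₂ => hne <| Sum.inr_injective <|
    (h.idxFun_eq_inr_iff.2 h₁).symm.trans (h.idxFun_eq_inr_iff.2 h₂)

lemma apply_of_mem (h : Parametrizes l Ms ρ) (x : Fin m → Λ) {t : Fin k} {ℓ : Fin m}
    (ht : t ∈ Ms ℓ) : l x t = x ℓ :=
  Combinatorics.Subspace.apply_inr (h.idxFun_eq_inr_iff.2 ht)

lemma inSubspace_iff (h : Parametrizes l Ms ρ) {ν : Fin k → Λ} :
    InSubspace Ms ρ ν ↔ ∃ x, l x = ν := by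
  constructor
  · rintro ⟨hoff, hblock⟩
    choose x hx using hblock
    refine ⟨x, funext fun t => ?_⟩
    by_cases ht : ∃ ℓ, t ∈ Ms ℓ
    · obtain ⟨ℓ, hℓ⟩ := ht
      rw [h.apply_of_mem x hℓ, hx ℓ t hℓ]
    · push Not at ht
      rw [h.apply_of_forall_notMem x ht, hoff t ht]
  · rintro ⟨x, rfl⟩
    exact ⟨fun t => h.apply_of_forall_notMem x, fun ℓ => ⟨x ℓ, fun t => h.apply_of_mem x⟩⟩

lemma blockCount_apply [DecidableEq Λ] (h : Parametrizes l Ms ρ) (x : Fin m → Λ) (α : Λ) :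
    blockCount Ms (l x) α = #{ℓ | x ℓ = α} := by
  refine congrArg card (filter_congr fun ℓ _ => ⟨fun hα => ?_, fun hα t ht => ?_⟩)
  · obtain ⟨t, ht⟩ := h.nonempty ℓ
    rw [← h.apply_of_mem x ht, hα t ht]
  · rw [h.apply_of_mem x ht, hα]

end Parametrizes

lemma f8StarProp_iff_exists_subspace [DecidableEq Λ] [Nonempty Λ] :
    F8StarProp Λ C m k ↔ ∀ d : (Fin k → Λ) → C,
      ∃ l : Combinatorics.Subspace (Fin m) Λ (Fin k), ∀ x y : Fin m → Λ,
        (∀ α, #{ℓ | x ℓ = α} = #{ℓ | y ℓ = α}) → d (l x) = d (l y) := by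
  refine forall_congr' fun d => ⟨?_, ?_⟩
  · rintro ⟨Ms, ρ, hMs, hdisj, hd⟩
    obtain ⟨l, hl⟩ := exists_parametrizes_of_blocks ρ hMs hdisj
    have hmem : ∀ x, InSubspace Ms ρ (l x) := fun x => hl.inSubspace_iff.2 ⟨x, rfl⟩
    refine ⟨l, fun x y hxy => hd _ _ (hmem x) (hmem y) ?_⟩
    simpa only [hl.blockCount_apply] using hxy
  · rintro ⟨l, hd⟩
    obtain ⟨Ms, ρ, hl⟩ := exists_blocks_parametrizes l
    refine ⟨Ms, ρ, hl.nonempty, fun _ _ => hl.disjoint, fun ν₁ ν₂ h₁ h₂ hcount => ?_⟩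
    obtain ⟨x, rfl⟩ := hl.inSubspace_iff.1 h₁
    obtain ⟨y, rfl⟩ := hl.inSubspace_iff.1 h₂
    exact hd x y (by simpa only [hl.blockCount_apply] using hcount)

lemma f8StarProp_f8Star (Λ C : Type*) [Finite Λ] [DecidableEq Λ] [Nonempty Λ] [Finite C] (m : ℕ) :
    F8StarProp Λ C m (f8Star Λ C m) := by
  obtain ⟨n, hn⟩ := Combinatorics.Subspace.exists_mono_in_high_dimension_fin Λ C (Fin m)
  refine Nat.sInf_mem (s := {k | F8StarProp Λ C m k})
    ⟨n, f8StarProp_iff_exists_subspace.2 fun d => ?_⟩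
  obtain ⟨l, c, hc⟩ := hn d
  exact ⟨l, fun x y _ => (hc x).trans (hc y).symm⟩

lemma hasMonoLine_iff_exists_line [Nonempty Λ] {d : (Fin k → Λ) → C} :
    HasMonoLine d ↔ ∃ L : Combinatorics.Line Λ (Fin k), L.IsMono d := by
  classical
  constructor
  · rintro ⟨N, ⟨t₀, ht₀⟩, ρ, c, hc⟩
    refine ⟨⟨fun t => if t ∈ N then none else some (ρ t), t₀, if_pos ht₀⟩, c, fun a => ?_⟩
    exact hc _ (fun t ht => by simp [ht]) ⟨a, fun t ht => by simp [ht]⟩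
  · rintro ⟨L, c, hc⟩
    obtain ⟨t₀, ht₀⟩ := L.proper
    refine ⟨univ.filter (L.idxFun · = none), ⟨t₀, by simpa using ht₀⟩,
      L (Classical.arbitrary Λ), c, ?_⟩
    rintro η hoff ⟨a, ha⟩
    have hη : η = L a := by
      funext t
      cases h : L.idxFun t with
      | none => rw [L.apply_none a t h, ha t (by simpa using h)]
      | some b =>
        rw [hoff t (by simp [h]), Combinatorics.Line.apply_some h, Combinatorics.Line.apply_some h]
    rw [hη, hc]

lemma HasMonoLine.of_comp_subspace [Nonempty Λ] {d : (Fin k → Λ) → C}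
    (l : Combinatorics.Subspace (Fin m) Λ (Fin k)) (h : HasMonoLine fun x => d (l x)) :
    HasMonoLine d := by
  obtain ⟨L, c, hc⟩ := hasMonoLine_iff_exists_line.1 h
  refine hasMonoLine_iff_exists_line.2 ⟨composeLine l L, c, fun a => ?_⟩
  rw [composeLine_apply]
  exact hc a

theorem exists_reduced_coloring_general [DecidableEq Λ] [Nonempty Λ] (h : F8StarProp Λ C m k)
    (d : (Fin k → Λ) → C) :
    ∃ e : (Fin m → Λ) → C,
      (∀ η₁ η₂ : Fin m → Λ, (∀ α, #{t | η₁ t = α} = #{t | η₂ t = α}) → e η₁ = e η₂) ∧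
      (HasMonoLine e → HasMonoLine d) := by
  obtain ⟨l, hl⟩ := f8StarProp_iff_exists_subspace.1 h d
  exact ⟨fun x => d (l x), hl, HasMonoLine.of_comp_subspace l⟩

end Coloring

/-- Given a coloring `d` of `U_{m**, Λ}`, where `m** = f^{8,*}_Λ(m*, C)`, there is a coloring
`e` of `U_{m*, Λ}` depending only on the number of occurrences of each letter, such that an
`e`-monochromatic line yields a `d`-monochromatic line. -/
theorem exists_reduced_coloring (Λ C : Type*) [Fintype Λ] [DecidableEq Λ] [Nonempty Λ]
    [Fintype C] [Nonempty C] (mstar : ℕ) (hmstar : 0 < mstar)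
    (d : (Fin (f8Star Λ C mstar) → Λ) → C) :
    ∃ e : (Fin mstar → Λ) → C,
      (∀ η₁ η₂ : Fin mstar → Λ,
        (∀ α : Λ, (Finset.univ.filter fun t => η₁ t = α).card =
            (Finset.univ.filter fun t => η₂ t = α).card) → e η₁ = e η₂) ∧
      (HasMonoLine e → HasMonoLine d) :=
  exists_reduced_coloring_general (f8StarProp_f8Star Λ C mstar) d
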